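/- Let (a,b) and (c,d) be admissible pairs such that a ≠ c, b ≠ c, and let n ≥ 0 be an integer with cdq/(ab) > q^{−2n}. Set w(x) = w(x; a,b,c,d), P_n(x) = P_n(x; a,b,c,d), w*(x) = w(x; a,b,cq^{−1},dq^{−1}) and P*_{n+1}(x) = P_{n+1}(x; a,b,cq^{−1},dq^{−1}). Then for every y ∈ Λ one has Σ_{x ∈ Λ, x ◁ y} w*(x) P*_{n+1}(x) = cq/((b−c)(a−c)) · w(y) P_n(y)/|y|, the series on the left converging absolutely. -/

import Mathlib

open scoped BigOperators
open Classical

noncomputable section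

def Lambda (q zm zp : ℝ) : Set ℝ :=
  {x | ∃ m : ℤ, x = zm * q ^ m} ∪ {x | ∃ n : ℤ, x = zp * q ^ n}

/-- finite q-Pochhammer symbol (a;q)_n in ℂ. -/
def qpochC (a : ℂ) (q : ℝ) (n : ℕ) : ℂ := ∏ m ∈ Finset.range n, (1 - a * (q : ℂ) ^ m)

/-- infinite q-Pochhammer symbol (a;q)_∞ in ℂ. -/
def qpochInf (a : ℂ) (q : ℝ) : ℂ := ∏' m : ℕ, (1 - a * (q : ℂ) ^ m)

/-- theta function θ_q(u) = (u;q)_∞ (q/u;q)_∞. -/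
def thetaQ (q : ℝ) (u : ℂ) : ℂ := qpochInf u q * qpochInf ((q : ℂ) / u) q

/-- admissible pair of parameters. -/
def AdmissiblePair (q zm zp : ℝ) (a b : ℂ) : Prop :=
  a ≠ 0 ∧ b ≠ 0 ∧
    ((a.im ≠ 0 ∧ b = (starRingEnd ℂ) a) ∨
     (a.im = 0 ∧ b.im = 0 ∧
       ∃ s t : ℝ, s ∈ Lambda q zm zp ∧ t ∈ Lambda q zm zp ∧ s < t ∧
         (∀ u ∈ Lambda q zm zp, ¬ (s < u ∧ u < t)) ∧
         a⁻¹.re ∈ Set.Ioo s t ∧ b⁻¹.re ∈ Set.Ioo s t))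

/-- admissible nondegenerate quadruple: (α,β), (γ,δ) admissible pairs and γδq > αβ. -/
def AdmissibleNondeg (q zm zp : ℝ) (al be ga de : ℂ) : Prop :=
  AdmissiblePair q zm zp al be ∧ AdmissiblePair q zm zp ga de ∧
    (al * be).re < (ga * de).re * q

/-- the weight w(x; a,b,c,d) = |x| (ax;q)_∞(bx;q)_∞ / ((cx;q)_∞(dx;q)_∞). -/
def weightC (q : ℝ) (a b c d : ℂ) (x : ℝ) : ℂ :=
  (|x| : ℝ) * (qpochInf (a * x) q * qpochInf (b * x) q) /
    (qpochInf (c * x) q * qpochInf (d * x) q)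

/-- pseudo big q-Jacobi polynomial P_n(x; a,b,c,d). -/
def pbqJ (q : ℝ) (a b c d : ℂ) (n : ℕ) (x : ℂ) : ℂ :=
  ∑ k ∈ Finset.range (n + 1),
    qpochC ((q : ℂ) ^ (-(n : ℤ))) q k * qpochC (c * d * (q : ℂ) ^ ((n : ℤ) + 1) / (a * b)) q k *
        qpochC (c * x) q k /
      (qpochC (c * (q : ℂ) / b) q k * qpochC (c * (q : ℂ) / a) q k * qpochC (q : ℂ) q k) *
      (q : ℂ) ^ k

/-- leading coefficient k_n(a,b,c,d) of P_n. -/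
def kCoeff (q : ℝ) (a b c d : ℂ) (n : ℕ) : ℂ :=
  c ^ n * qpochC (c * d * (q : ℂ) ^ ((n : ℤ) + 1) / (a * b)) q n /
    (qpochC (c * (q : ℂ) / b) q n * qpochC (c * (q : ℂ) / a) q n)

/-- the q-hypergeometric series ₂φ₁(A,B;C;q,Z). -/
def phi21 (q : ℝ) (A B C Z : ℂ) : ℂ :=
  ∑' m : ℕ, qpochC A q m * qpochC B q m / (qpochC C q m * qpochC (q : ℂ) q m) * Z ^ m

/-- principal branch square root. -/
def csqrt (z : ℂ) : ℂ := z ^ (1 / 2 : ℂ)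


/-- the relation x ◁ y: either y > 0 and x < y, or y < 0 and x ≤ y. -/
def triLT (x y : ℝ) : Prop := (0 < y ∧ x < y) ∨ (y < 0 ∧ x ≤ y)

lemma qpochC_zero (a : ℂ) (q : ℝ) : qpochC a q 0 = 1 := by simp [qpochC]

lemma qpochC_succ (a : ℂ) (q : ℝ) (n : ℕ) :
    qpochC a q (n + 1) = qpochC a q n * (1 - a * (q : ℂ) ^ n) := by
  simp [qpochC, Finset.prod_range_succ]

lemma qpochC_succ' (a : ℂ) (q : ℝ) (n : ℕ) :
    qpochC a q (n + 1) = (1 - a) * qpochC (a * q) q n := by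
  simp only [qpochC, Finset.prod_range_succ', pow_zero, mul_one]
  rw [mul_comm]
  congr 1
  apply Finset.prod_congr rfl
  intro i _
  ring

lemma telescope_poly (q a b c d z K : ℂ) (hq : q ≠ 0) (hc : c ≠ 0) (A B u v : ℕ → ℂ) (n : ℕ)
    (hu : ∀ k, u (k + 1) = (1 - c * z * q ^ k / q) * u k)
    (hv : ∀ k, (1 - c * z / q) * v k = u (k + 1))
    (h0 : B 0 = K * (A 0 * (a - c) * (b - c) / (c * q)))
    (hs : ∀ k < n, B (k + 1) = K * (A (k + 1) * (a - c * q ^ (k + 1)) * (b - c * q ^ (k + 1)) /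
      (c * q ^ (k + 2)) - A k * (a * b - c * d * q ^ k) / (c * q ^ (k + 1))))
    (hl : B (n + 1) = - K * (A n * (a * b - c * d * q ^ n) / (c * q ^ (n + 1)))) :
    K * ((1 - a * z / q) * (1 - b * z / q) * (∑ k ∈ Finset.range (n + 1), A k * u k) -
      (1 - c * z / q) * (1 - d * z / q) * (∑ k ∈ Finset.range (n + 1), A k * v k)) =
    z * ∑ k ∈ Finset.range (n + 1 + 1), B k * u k := by
  have key : ∀ m ≤ n, K * ((1 - a * z / q) * (1 - b * z / q) *
      (∑ k ∈ Finset.range (m + 1), A k * u k) -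
      (1 - d * z / q) * (∑ k ∈ Finset.range (m + 1), A k * u (k + 1))) =
    z * ((∑ k ∈ Finset.range (m + 1), B k * u k) -
      K * (A m * (a * b - c * d * q ^ m) / (c * q ^ (m + 1))) * u (m + 1)) := by
    intro m
    induction m with
    | zero =>
      intro _
      simp only [zero_add, Finset.sum_range_one, h0, hu]
      field_simp
      ring
    | succ m ih =>
      intro hm
      have ih := ih (by omega)
      rw [Finset.sum_range_succ _ (m + 1), Finset.sum_range_succ _ (m + 1),
        Finset.sum_range_succ _ (m + 1), hs m (by omega), hu (m + 1)]
      have e : ∀ S T R : ℂ, K * ((1 - a * z / q) * (1 - b * z / q) * S - (1 - d * z / q) * T) = R →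
        K * ((1 - a * z / q) * (1 - b * z / q) * (S + A (m + 1) * u (m + 1)) - (1 - d * z / q) *
          (T + A (m + 1) * ((1 - c * z * q ^ (m + 1) / q) * u (m + 1)))) =
        R + K * (((1 - a * z / q) * (1 - b * z / q) - (1 - d * z / q) *
          (1 - c * z * q ^ (m + 1) / q)) * A (m + 1) * u (m + 1)) := by
        intro S T R h
        rw [← h]; ring
      rw [e _ _ _ ih]
      have hqm : q ^ m ≠ 0 := pow_ne_zero _ hq
      simp only [pow_succ]
      field_simp
      ring
  have h1 : (1 - c * z / q) * (1 - d * z / q) * (∑ k ∈ Finset.range (n + 1), A k * v k) =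
      (1 - d * z / q) * (∑ k ∈ Finset.range (n + 1), A k * u (k + 1)) := by
    rw [Finset.mul_sum, Finset.mul_sum]
    apply Finset.sum_congr rfl
    intro k _
    rw [← hv]; ring
  rw [h1, key n le_rfl, Finset.sum_range_succ _ (n + 1), hl]
  ring

lemma poly_identity (q : ℝ) (hq0 : 0 < q) (hq1 : q < 1) (a b c d z : ℂ) (n : ℕ)
    (ha : a ≠ 0) (hb : b ≠ 0) (hc : c ≠ 0) (hac : a ≠ c) (hbc : b ≠ c)
    (hA : ∀ k, 1 ≤ k → k ≤ n → c * (q : ℂ) ^ k ≠ a)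
    (hB : ∀ k, 1 ≤ k → k ≤ n → c * (q : ℂ) ^ k ≠ b) :
    c * (q : ℂ) / ((b - c) * (a - c)) *
      ((1 - a * z / q) * (1 - b * z / q) * pbqJ q a b c d n (z / q) -
      (1 - c * z / q) * (1 - d * z / q) * pbqJ q a b c d n z) =
    z * pbqJ q a b (c / q) (d / q) (n + 1) z := by
  have hq : (q : ℂ) ≠ 0 := by exact_mod_cast hq0.ne'
  have hac' : a - c ≠ 0 := sub_ne_zero.2 hac
  have hbc' : b - c ≠ 0 := sub_ne_zero.2 hbc
  have hq' : ∀ k : ℕ, (1 - (q : ℂ) ^ (k + 1)) ≠ 0 := by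
    intro k h
    have : (q : ℝ) ^ (k + 1) = 1 := by
      have := (sub_eq_zero.1 h).symm
      exact_mod_cast this
    exact absurd this (pow_lt_one₀ hq0.le hq1 (by omega)).ne
  set A : ℕ → ℂ := fun k => qpochC ((q : ℂ) ^ (-(n : ℤ))) q k *
      qpochC (c * d * (q : ℂ) ^ ((n : ℤ) + 1) / (a * b)) q k /
      (qpochC (c * (q : ℂ) / b) q k * qpochC (c * (q : ℂ) / a) q k * qpochC (q : ℂ) q k) *
      (q : ℂ) ^ k with hAdef
  set B : ℕ → ℂ := fun k => qpochC ((q : ℂ) ^ (-((n + 1 : ℕ) : ℤ))) q k *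
      qpochC (c / q * (d / q) * (q : ℂ) ^ (((n + 1 : ℕ) : ℤ) + 1) / (a * b)) q k /
      (qpochC (c / q * (q : ℂ) / b) q k * qpochC (c / q * (q : ℂ) / a) q k * qpochC (q : ℂ) q k) *
      (q : ℂ) ^ k with hBdef
  have hP1 : ∀ x, pbqJ q a b c d n x = ∑ k ∈ Finset.range (n + 1), A k * qpochC (c * x) q k := by
    intro x
    apply Finset.sum_congr rfl
    intro k _
    simp only [hAdef]
    ring
  have hP2 : pbqJ q a b (c / q) (d / q) (n + 1) z =
      ∑ k ∈ Finset.range (n + 1 + 1), B k * qpochC (c * (z / q)) q k := by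
    apply Finset.sum_congr rfl
    intro k _
    simp only [hBdef]
    rw [show c / (q : ℂ) * z = c * (z / q) by ring]
    ring
  have hqn : (q : ℂ) ^ n ≠ 0 := pow_ne_zero _ hq
  have e1 : (q : ℂ) ^ (-((n + 1 : ℕ) : ℤ)) = ((q : ℂ) ^ n)⁻¹ * (q : ℂ)⁻¹ := by
    rw [zpow_neg, zpow_natCast, pow_succ, mul_inv]
  have e2 : (q : ℂ) ^ (-(n : ℤ)) = ((q : ℂ) ^ n)⁻¹ := by
    rw [zpow_neg, zpow_natCast]
  have e3 : (q : ℂ) ^ ((n : ℤ) + 1) = (q : ℂ) ^ n * q := by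
    rw [zpow_add₀ hq, zpow_natCast, zpow_one]
  have e4 : (q : ℂ) ^ (((n + 1 : ℕ) : ℤ) + 1) = (q : ℂ) ^ n * q * q := by
    rw [zpow_add₀ hq, zpow_natCast, zpow_one, pow_succ]
  have hAs : ∀ k, A (k + 1) = A k * ((1 - ((q : ℂ) ^ n)⁻¹ * q ^ k) *
      (1 - c * d * (q ^ n * q) / (a * b) * q ^ k) * q /
      ((1 - c * q / b * q ^ k) * (1 - c * q / a * q ^ k) * (1 - (q : ℂ) ^ (k + 1)))) := by
    intro k
    simp only [hAdef, qpochC_succ, e2, e3]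
    rw [show (q : ℂ) * q ^ k = q ^ (k + 1) by ring]
    simp only [div_eq_mul_inv, mul_inv]
    ring
  have hBs : ∀ k, B (k + 1) = A k * ((1 - ((q : ℂ) ^ n)⁻¹ * (q : ℂ)⁻¹) *
      (1 - c * d * q ^ n / (a * b)) * q /
      ((1 - c / b) * (1 - c / a) * (1 - (q : ℂ) ^ (k + 1)))) := by
    intro k
    simp only [hAdef, hBdef]
    rw [qpochC_succ (q : ℂ)]
    simp only [qpochC_succ', e1, e2, e3, e4]
    rw [show (q : ℂ) * q ^ k = q ^ (k + 1) by ring,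
      show ((q : ℂ) ^ n)⁻¹ * (q : ℂ)⁻¹ * q = ((q : ℂ) ^ n)⁻¹ by field_simp,
      show c / (q : ℂ) * q / b * q = c * q / b by field_simp,
      show c / (q : ℂ) * q / a * q = c * q / a by field_simp,
      show c / (q : ℂ) * q / b = c / b by field_simp,
      show c / (q : ℂ) * q / a = c / a by field_simp,
      show c / (q : ℂ) * (d / q) * ((q : ℂ) ^ n * q * q) / (a * b) * q =
        c * d * (q ^ n * q) / (a * b) by field_simp,
      show c / (q : ℂ) * (d / q) * ((q : ℂ) ^ n * q * q) / (a * b) =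
        c * d * q ^ n / (a * b) by field_simp]
    simp only [div_eq_mul_inv, mul_inv]
    ring
  have hcb : 1 - c / b ≠ 0 := by
    rw [one_sub_div hb]; exact div_ne_zero hbc' hb
  have hca : 1 - c / a ≠ 0 := by
    rw [one_sub_div ha]; exact div_ne_zero hac' ha
  rw [hP1, hP1, hP2]
  refine telescope_poly q a b c d z _ hq hc A B _ _ n ?_ ?_ ?_ ?_ ?_
  · intro k
    rw [qpochC_succ]; ring
  · intro k
    rw [qpochC_succ']
    rw [show c * (z / (q : ℂ)) * q = c * z by field_simp]
    ring
  · simp only [hAdef, hBdef, qpochC_zero]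
    field_simp
  · intro k hk
    have hb1 : b - c * q ^ (k + 1) ≠ 0 := sub_ne_zero.2 (hB (k + 1) (by omega) (by omega)).symm
    have ha1 : a - c * q ^ (k + 1) ≠ 0 := sub_ne_zero.2 (hA (k + 1) (by omega) (by omega)).symm
    have hqk := hq' k
    have hqk' : (q : ℂ) ^ k ≠ 0 := pow_ne_zero _ hq
    rw [hBs, hAs,
      show 1 - c * (q : ℂ) / b * q ^ k = (b - c * q ^ (k + 1)) / b by field_simp; ring,
      show 1 - c * (q : ℂ) / a * q ^ k = (a - c * q ^ (k + 1)) / a by field_simp; ring,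
      one_sub_div hb, one_sub_div ha]
    generalize hX : b - c * (q : ℂ) ^ (k + 1) = X at *
    generalize hY : a - c * (q : ℂ) ^ (k + 1) = Y at *
    generalize hZ : 1 - (q : ℂ) ^ (k + 1) = Z at *
    field_simp
    rw [← hZ]
    ring
  · have hqk := hq' n
    rw [hBs, one_sub_div hb, one_sub_div ha]
    generalize hZ : 1 - (q : ℂ) ^ (n + 1) = Z at *
    field_simp
    rw [← hZ]
    ring

lemma lambda_zpow {q zm zp : ℝ} (hq0 : 0 < q) {x : ℝ} (hx : x ∈ Lambda q zm zp) (j : ℤ) :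
    x * q ^ j ∈ Lambda q zm zp := by
  rcases hx with ⟨m, rfl⟩ | ⟨m, rfl⟩
  · exact Or.inl ⟨m + j, by rw [zpow_add₀ hq0.ne']; ring⟩
  · exact Or.inr ⟨m + j, by rw [zpow_add₀ hq0.ne']; ring⟩

lemma lambda_div {q zm zp : ℝ} (hq0 : 0 < q) {x : ℝ} (hx : x ∈ Lambda q zm zp) :
    x / q ∈ Lambda q zm zp := by
  simpa [div_eq_mul_inv] using lambda_zpow hq0 hx (-1)

lemma lambda_pow {q zm zp : ℝ} (hq0 : 0 < q) {x : ℝ} (hx : x ∈ Lambda q zm zp) (j : ℕ) :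
    x * q ^ j ∈ Lambda q zm zp := by
  simpa using lambda_zpow hq0 hx (j : ℤ)

lemma lambda_div_pow {q zm zp : ℝ} (hq0 : 0 < q) {x : ℝ} (hx : x ∈ Lambda q zm zp) (j : ℕ) :
    x / q ^ j ∈ Lambda q zm zp := by
  simpa [div_eq_mul_inv] using lambda_zpow hq0 hx (-(j : ℤ))

lemma lambda_ne {q zm zp : ℝ} (hq0 : 0 < q) (hzm : zm < 0) (hzp : 0 < zp) {x : ℝ}
    (hx : x ∈ Lambda q zm zp) : x ≠ 0 := by
  rcases hx with ⟨m, rfl⟩ | ⟨m, rfl⟩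
  · exact mul_ne_zero hzm.ne (zpow_pos hq0 m).ne'
  · exact mul_ne_zero hzp.ne' (zpow_pos hq0 m).ne'

lemma adm_symm {q zm zp : ℝ} {a b : ℂ} (h : AdmissiblePair q zm zp a b) :
    AdmissiblePair q zm zp b a := by
  obtain ⟨ha, hb, h | ⟨h1, h2, s, t, hs, ht, hst, hg, h3, h4⟩⟩ := h
  · refine ⟨hb, ha, Or.inl ⟨?_, ?_⟩⟩
    · rw [h.2]; simpa using h.1
    · rw [h.2]; simp
  · exact ⟨hb, ha, Or.inr ⟨h2, h1, s, t, hs, ht, hst, hg, h4, h3⟩⟩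

lemma adm_mul_ne_one {q zm zp : ℝ} {a b : ℂ} (h : AdmissiblePair q zm zp a b) {x : ℝ}
    (hx : x ∈ Lambda q zm zp) : a * x ≠ 1 := by
  intro e
  have e' : a⁻¹ = (x : ℂ) := by
    rw [inv_eq_iff_eq_inv]; exact eq_inv_of_mul_eq_one_left e
  obtain ⟨ha, hb, h | ⟨h1, h2, s, t, hs, ht, hst, hg, h3, h4⟩⟩ := h
  · apply h.1
    have : a = ((x⁻¹ : ℝ) : ℂ) := by
      rw [inv_eq_iff_eq_inv] at e'; rw [e']; push_cast; rfl
    rw [this, Complex.ofReal_im]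
  · rw [e', Complex.ofReal_re] at h3
    exact hg x hx h3

lemma no_resonance {q zm zp : ℝ} (hq0 : 0 < q) (hq1 : q < 1) (hzm : zm < 0) (hzp : 0 < zp)
    {a b c d : ℂ}
    (hab : AdmissiblePair q zm zp a b) (hcd : AdmissiblePair q zm zp c d) (n : ℕ)
    (hn : (q : ℝ) ^ (-(2 * n : ℤ)) < (c * d * (q : ℂ) / (a * b)).re)
    (k : ℕ) (hk : k ≤ n) : c * (q : ℂ) ^ k ≠ b := by
  intro e
  have hqc : (q : ℂ) ≠ 0 := by exact_mod_cast hq0.ne'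
  have hqk : (q : ℂ) ^ k ≠ 0 := pow_ne_zero _ hqc
  have hqk0 : 0 < q ^ k := pow_pos hq0 k
  have hc0 : c ≠ 0 := hcd.1
  have hd0 : d ≠ 0 := hcd.2.1
  have ha0 : a ≠ 0 := hab.1
  have hb0 : b ≠ 0 := hab.2.1
  have him : b.im = c.im * q ^ k := by
    rw [← e, ← Complex.ofReal_pow, Complex.im_mul_ofReal]
  have hkn : (q ^ (2 * k))⁻¹ ≤ q ^ (-(2 * n : ℤ)) := by
    rw [zpow_neg]
    have : (q : ℝ) ^ (2 * n : ℤ) = q ^ (2 * n) := by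
      rw [← zpow_natCast]; push_cast; rfl
    rw [this]
    apply inv_anti₀ (pow_pos hq0 _)
    exact pow_le_pow_of_le_one hq0.le hq1.le (by omega)
  have hn' := lt_of_le_of_lt hkn hn
  obtain ⟨-, -, ⟨h1, h2⟩ | ⟨h1, h2, s, t, hs, ht, hst, hg, h3, h4⟩⟩ := hab
  · have hbim : b.im ≠ 0 := by rw [h2]; simpa using h1
    obtain ⟨-, -, ⟨h1', h2'⟩ | ⟨h1', -⟩⟩ := hcd
    · have ea : a = d * (q : ℂ) ^ k := by
        have : a = (starRingEnd ℂ) b := by rw [h2]; simp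
        rw [this, ← e, h2']; simp
      have : c * d * (q : ℂ) / (a * b) = ((q * (q ^ (2 * k))⁻¹ : ℝ) : ℂ) := by
        rw [ea, ← e]; push_cast; rw [two_mul, pow_add]; field_simp
      rw [this, Complex.ofReal_re] at hn'
      have := inv_pos.2 (pow_pos hq0 (2 * k))
      nlinarith
    · rw [h1', zero_mul] at him; exact hbim him
  · obtain ⟨-, -, ⟨h1', h2'⟩ | ⟨h1', h2', s', t', hs', ht', hst', hg', h3', h4'⟩⟩ := hcd
    · rw [h2] at him
      exact h1' ((mul_eq_zero.1 him.symm).resolve_right hqk0.ne')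
    · obtain ⟨A, hA⟩ : ∃ A : ℝ, a⁻¹ = (A : ℂ) := ⟨(a⁻¹).re, by
        apply Complex.ext <;> simp [h1]⟩
      obtain ⟨C, hC⟩ : ∃ C : ℝ, c⁻¹ = (C : ℂ) := ⟨(c⁻¹).re, by
        apply Complex.ext <;> simp [h1']⟩
      obtain ⟨D, hD⟩ : ∃ D : ℝ, d⁻¹ = (D : ℂ) := ⟨(d⁻¹).re, by
        apply Complex.ext <;> simp [h2']⟩
      have hB : b⁻¹ = ((C / q ^ k : ℝ) : ℂ) := by
        rw [← e, mul_inv, hC]; push_cast; rfl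
      rw [hA, Complex.ofReal_re] at h3
      rw [hB, Complex.ofReal_re] at h4
      rw [hC, Complex.ofReal_re] at h3'
      rw [hD, Complex.ofReal_re] at h4'
      have hC0 : C ≠ 0 := by
        rintro rfl; simp at hC; exact hc0 hC
      have hD0 : D ≠ 0 := by
        rintro rfl; simp at hD; exact hd0 hD
      have hval : c * d * (q : ℂ) / (a * b) = ((q * (A / D) / q ^ k : ℝ) : ℂ) := by
        have : c * d * (q : ℂ) / (a * b) = (c⁻¹)⁻¹ * (d⁻¹)⁻¹ * q * a⁻¹ * b⁻¹ := by
          simp; field_simp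
        rw [this, hA, hB, hC, hD]
        push_cast
        have : (C : ℂ) ≠ 0 := by exact_mod_cast hC0
        field_simp
      rw [hval, Complex.ofReal_re] at hn'
      obtain ⟨E, hE⟩ : ∃ E, E = D / q ^ k := ⟨_, rfl⟩
      have hDE : D = E * q ^ k := by rw [hE]; field_simp
      have hE0 : E ≠ 0 := by rw [hE]; exact div_ne_zero hD0 hqk0.ne'
      have hkey : 1 < q * (A / E) := by
        have e1 : q * (A / D) / q ^ k = (q * (A / E)) * (q ^ (2 * k))⁻¹ := by
          rw [hDE, two_mul, pow_add]; field_simp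
        rw [e1] at hn'
        have := inv_pos.2 (pow_pos hq0 (2 * k))
        by_contra hcon
        push Not at hcon
        nlinarith
      have hEs : s < E := by
        by_contra hcon
        push Not at hcon
        refine hg' (s * q ^ k) (lambda_pow hq0 hs k) ⟨?_, ?_⟩
        · refine lt_of_lt_of_le h4'.1 ?_
          rw [hDE]; exact mul_le_mul_of_nonneg_right hcon hqk0.le
        · refine lt_trans ?_ h3'.2
          exact (lt_div_iff₀ hqk0).1 h4.1
      have hEt : E < t := by
        by_contra hcon
        push Not at hcon
        refine hg' (t * q ^ k) (lambda_pow hq0 ht k) ⟨?_, ?_⟩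
        · refine lt_trans h3'.1 ?_
          exact (div_lt_iff₀ hqk0).1 h4.2
        · refine lt_of_le_of_lt ?_ h4'.2
          rw [hDE]; exact mul_le_mul_of_nonneg_right hcon hqk0.le
      rcases lt_or_gt_of_ne (lambda_ne hq0 hzm hzp ht) with ht0 | ht0
      · have hs0 : s < 0 := hst.trans ht0
        have h5 : t ≤ s * q := by
          by_contra hcon
          push Not at hcon
          exact hg (s * q) (by simpa using lambda_pow hq0 hs 1) ⟨by nlinarith, hcon⟩
        have hEneg : E < 0 := hEt.trans ht0
        rw [← mul_div_assoc, lt_div_iff_of_neg hEneg] at hkey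
        have := h3.1
        nlinarith
      · have h5 : t * q ≤ s := by
          by_contra hcon
          push Not at hcon
          exact hg (t * q) (by simpa using lambda_pow hq0 ht 1) ⟨hcon, by nlinarith⟩
        have hEpos : 0 < E := by
          have : 0 < t * q := mul_pos ht0 hq0
          linarith
        rw [← mul_div_assoc, lt_div_iff₀ hEpos] at hkey
        have := h3.2
        nlinarith

lemma summable_qp (z : ℂ) {q : ℝ} (hq0 : 0 < q) (hq1 : q < 1) :
    Summable (fun m : ℕ => ‖-(z * (q : ℂ) ^ m)‖) := by
  simp only [norm_neg, norm_mul, norm_pow, Complex.norm_real, Real.norm_of_nonneg hq0.le]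
  exact (summable_geometric_of_lt_one hq0.le hq1).mul_left _

lemma multipliable_qp (z : ℂ) {q : ℝ} (hq0 : 0 < q) (hq1 : q < 1) :
    Multipliable (fun m : ℕ => 1 - z * (q : ℂ) ^ m) := by
  have := multipliable_one_add_of_summable (summable_qp z hq0 hq1)
  simpa [sub_eq_add_neg] using this

lemma qpochInf_step (z : ℂ) {q : ℝ} (hq0 : 0 < q) (hq1 : q < 1) :
    qpochInf z q = (1 - z) * qpochInf (z * q) q := by
  unfold qpochInf
  have e : ∀ m : ℕ, 1 - z * (q : ℂ) * q ^ m = 1 - z * (q : ℂ) ^ (m + 1) := by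
    intro m; ring
  rw [tprod_eq_zero_mul' (f := fun m : ℕ => 1 - z * (q : ℂ) ^ m)]
  · simp [e]
  · have := multipliable_qp (z * q) hq0 hq1
    simpa only [e] using this

lemma qpochInf_ne_zero (z : ℂ) {q : ℝ} (hq0 : 0 < q) (hq1 : q < 1)
    (h : ∀ m : ℕ, z * (q : ℂ) ^ m ≠ 1) : qpochInf z q ≠ 0 := by
  unfold qpochInf
  have := tprod_one_add_ne_zero_of_summable (f := fun m : ℕ => -(z * (q : ℂ) ^ m))
    (by intro m; rw [← sub_eq_add_neg]; exact sub_ne_zero.2 (h m).symm) (summable_qp z hq0 hq1)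
  simpa [sub_eq_add_neg] using this

lemma qpochInf_bound (z : ℂ) {q : ℝ} (hq0 : 0 < q) (hq1 : q < 1) :
    ‖qpochInf z q - 1‖ ≤ Real.exp (‖z‖ * (1 - q)⁻¹) - 1 := by
  have h := (multipliable_qp z hq0 hq1).hasProd
  have h2 : Filter.Tendsto (fun s : Finset ℕ => ‖(∏ m ∈ s, (1 - z * (q : ℂ) ^ m)) - 1‖)
      Filter.atTop (nhds ‖qpochInf z q - 1‖) := (h.sub_const 1).norm
  refine le_of_tendsto h2 (Filter.Eventually.of_forall fun s => ?_)
  have h3 := Finset.norm_prod_one_add_sub_one_le s (fun m : ℕ => -(z * (q : ℂ) ^ m))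
  simp only [← sub_eq_add_neg] at h3
  refine h3.trans ?_
  gcongr
  refine ((summable_qp z hq0 hq1).sum_le_tsum s (fun _ _ => norm_nonneg _)).trans ?_
  simp only [norm_neg, norm_mul, norm_pow, Complex.norm_real, Real.norm_of_nonneg hq0.le]
  rw [tsum_mul_left, tsum_geometric_of_lt_one hq0.le hq1]

lemma qpochInf_tendsto {q : ℝ} (hq0 : 0 < q) (hq1 : q < 1) {u : ℕ → ℂ}
    (hu : Filter.Tendsto u Filter.atTop (nhds 0)) :
    Filter.Tendsto (fun i => qpochInf (u i) q) Filter.atTop (nhds 1) := by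
  rw [tendsto_iff_norm_sub_tendsto_zero]
  have h : Filter.Tendsto (fun i => Real.exp (‖u i‖ * (1 - q)⁻¹) - 1) Filter.atTop (nhds 0) := by
    have h1 : Filter.Tendsto (fun i => ‖u i‖ * (1 - q)⁻¹) Filter.atTop (nhds 0) := by
      simpa using hu.norm.mul_const ((1 - q)⁻¹)
    have h2 := (Real.continuous_exp.tendsto 0).comp h1
    simpa using h2.sub_const 1
  exact squeeze_zero (fun _ => norm_nonneg _) (fun i => qpochInf_bound _ hq0 hq1) h

lemma continuous_pbqJ (q : ℝ) (a b c d : ℂ) (n : ℕ) : Continuous (pbqJ q a b c d n) := by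
  unfold pbqJ qpochC
  fun_prop

lemma norm_qpochC_le (z : ℂ) {q : ℝ} (hq0 : 0 < q) (hq1 : q < 1) (i k n : ℕ) (hk : k ≤ n) :
    ‖qpochC (z / (q : ℂ) ^ i) q k‖ ≤ (1 + ‖z‖) ^ n * ((q ^ i)⁻¹) ^ n := by
  have hqi : 1 ≤ (q ^ i)⁻¹ := (one_le_inv₀ (pow_pos hq0 _)).2 (pow_le_one₀ hq0.le hq1.le)
  have hz := norm_nonneg z
  unfold qpochC
  rw [norm_prod]
  have : ∏ m ∈ Finset.range k, ‖1 - z / (q : ℂ) ^ i * (q : ℂ) ^ m‖ ≤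
      ∏ m ∈ Finset.range k, ((1 + ‖z‖) * (q ^ i)⁻¹) := by
    apply Finset.prod_le_prod (fun _ _ => norm_nonneg _)
    intro m _
    refine (norm_sub_le _ _).trans ?_
    simp only [norm_one, norm_mul, norm_div, norm_pow, Complex.norm_real,
      Real.norm_of_nonneg hq0.le]
    have : q ^ m ≤ 1 := pow_le_one₀ hq0.le hq1.le
    have h2 : ‖z‖ / q ^ i * q ^ m ≤ ‖z‖ / q ^ i :=
      mul_le_of_le_one_right (by positivity) this
    rw [div_eq_mul_inv] at h2
    rw [div_eq_mul_inv]
    nlinarith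
  refine this.trans ?_
  rw [Finset.prod_const, Finset.card_range, ← mul_pow]
  exact pow_le_pow_right₀ (by nlinarith) hk

lemma pbqJ_bound {q : ℝ} (hq0 : 0 < q) (hq1 : q < 1) (a b c d x : ℂ) (n : ℕ) :
    ∃ M : ℝ, ∀ i : ℕ, ‖pbqJ q a b c d n (x / (q : ℂ) ^ i)‖ ≤ M * ((q ^ i)⁻¹) ^ n := by
  refine ⟨∑ k ∈ Finset.range (n + 1), ‖qpochC ((q : ℂ) ^ (-(n : ℤ))) q k *
      qpochC (c * d * (q : ℂ) ^ ((n : ℤ) + 1) / (a * b)) q k /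
      (qpochC (c * (q : ℂ) / b) q k * qpochC (c * (q : ℂ) / a) q k * qpochC (q : ℂ) q k) *
      (q : ℂ) ^ k‖ * (1 + ‖c * x‖) ^ n, fun i => ?_⟩
  unfold pbqJ
  rw [Finset.sum_mul]
  refine norm_sum_le_of_le _ fun k hk => ?_
  have := norm_qpochC_le (c * x) hq0 hq1 i k n (by simp at hk; omega)
  rw [show c * (x / (q : ℂ) ^ i) = c * x / (q : ℂ) ^ i by ring, mul_assoc (‖_‖)]
  refine le_trans (le_of_eq ?_) (mul_le_mul_of_nonneg_left this (norm_nonneg _))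
  rw [← norm_mul]
  congr 1
  ring

/-- the weight without the factor `|x|` -/
def vW (q : ℝ) (a b c d : ℂ) (x : ℝ) : ℂ :=
  (qpochInf (a * x) q * qpochInf (b * x) q) / (qpochInf (c * x) q * qpochInf (d * x) q)

lemma vW_div {q : ℝ} (hq0 : 0 < q) (hq1 : q < 1) (a b c d : ℂ) (x : ℝ) :
    vW q a b c d (x / q) = vW q a b c d x *
      (((1 - a * x / q) * (1 - b * x / q)) / ((1 - c * x / q) * (1 - d * x / q))) := by
  have hqc : (q : ℂ) ≠ 0 := by exact_mod_cast hq0.ne'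
  have e : ∀ t : ℂ, qpochInf (t * ((x / q : ℝ) : ℂ)) q = (1 - t * x / q) * qpochInf (t * x) q := by
    intro t
    rw [qpochInf_step _ hq0 hq1]
    push_cast
    rw [show t * ((x : ℂ) / q) * q = t * x by field_simp, mul_div_assoc]
  unfold vW
  rw [e a, e b, e c, e d]
  simp only [div_eq_mul_inv, mul_inv]
  ring

lemma vW_tendsto {q : ℝ} (hq0 : 0 < q) (hq1 : q < 1) (a b c d : ℂ) (x : ℝ) :
    Filter.Tendsto (fun i : ℕ => vW q a b c d (x * q ^ i)) Filter.atTop (nhds 1) := by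
  have h : ∀ t : ℂ, Filter.Tendsto (fun i : ℕ => qpochInf (t * ((x * q ^ i : ℝ) : ℂ)) q)
      Filter.atTop (nhds 1) := by
    intro t
    apply qpochInf_tendsto hq0 hq1
    have h1 : Filter.Tendsto (fun i : ℕ => x * q ^ i) Filter.atTop (nhds 0) := by
      simpa using (tendsto_pow_atTop_nhds_zero_of_lt_one hq0.le hq1).const_mul x
    have h2 := (Complex.continuous_ofReal.tendsto 0).comp h1
    simpa using h2.const_mul t
  have := ((h a).mul (h b)).div ((h c).mul (h d)) (by norm_num)
  rw [show (1 : ℂ) * 1 / (1 * 1) = 1 by norm_num] at this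
  exact this

lemma vW_summable {q : ℝ} (hq0 : 0 < q) (hq1 : q < 1) (a b c d : ℂ) (n : ℕ)
    (ha : a ≠ 0) (hb : b ≠ 0) (hc : c ≠ 0) (hd : d ≠ 0)
    (hn : (q : ℝ) ^ (-(2 * n : ℤ)) < (c * d * (q : ℂ) / (a * b)).re) (x : ℝ) (hx : x ≠ 0) :
    Summable (fun i : ℕ => ‖vW q a b c d (x / q ^ i)‖ * ((q ^ i)⁻¹) ^ n) := by
  have hqc : (q : ℂ) ≠ 0 := by exact_mod_cast hq0.ne'
  have hxc : (x : ℂ) ≠ 0 := by exact_mod_cast hx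
  set R : ℕ → ℝ := fun i => ‖((1 - a * ((x / q ^ i : ℝ) : ℂ) / q) *
    (1 - b * ((x / q ^ i : ℝ) : ℂ) / q)) / ((1 - c * ((x / q ^ i : ℝ) : ℂ) / q) *
    (1 - d * ((x / q ^ i : ℝ) : ℂ) / q))‖ * (q⁻¹) ^ n with hR
  have hlim : Filter.Tendsto R Filter.atTop (nhds (‖a * b / (c * d)‖ * (q⁻¹) ^ n)) := by
    have hr : ∀ s : ℂ, Filter.Tendsto (fun i : ℕ => (q : ℂ) ^ i * (q / x) - s)
        Filter.atTop (nhds (-s)) := by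
      intro s
      have h1 : Filter.Tendsto (fun i : ℕ => (q : ℂ) ^ i) Filter.atTop (nhds 0) := by
        apply tendsto_pow_atTop_nhds_zero_of_norm_lt_one
        rwa [Complex.norm_real, Real.norm_of_nonneg hq0.le]
      simpa using (h1.mul_const ((q : ℂ) / x)).sub_const s
    have h2 := (((hr a).mul (hr b)).div ((hr c).mul (hr d))
      (by simp [hc, hd])).norm.mul_const ((q⁻¹) ^ n)
    have e0 : (-a * -b / (-c * -d)) = a * b / (c * d) := by simp
    rw [e0] at h2
    refine h2.congr fun i => ?_
    simp only [hR, Pi.div_apply]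
    congr 2
    have hqi : (q : ℂ) ^ i ≠ 0 := pow_ne_zero _ hqc
    have e : ∀ s : ℂ, 1 - s * ((x / q ^ i : ℝ) : ℂ) / q =
        ((q : ℂ) ^ i * (q / x) - s) * (x / (q ^ i * q)) := by
      intro s; push_cast; field_simp
    rw [e a, e b, e c, e d]
    have hw : (x : ℂ) / (q ^ i * q) ≠ 0 := by positivity
    generalize (x : ℂ) / (q ^ i * q) = w at *
    rw [show ((q : ℂ) ^ i * (q / x) - a) * w * (((q : ℂ) ^ i * (q / x) - b) * w) =
      ((q : ℂ) ^ i * (q / x) - a) * ((q : ℂ) ^ i * (q / x) - b) * (w * w) by ring,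
      show ((q : ℂ) ^ i * (q / x) - c) * w * (((q : ℂ) ^ i * (q / x) - d) * w) =
      ((q : ℂ) ^ i * (q / x) - c) * ((q : ℂ) ^ i * (q / x) - d) * (w * w) by ring,
      mul_div_mul_right _ _ (mul_ne_zero hw hw)]
  have hlt : ‖a * b / (c * d)‖ * (q⁻¹) ^ n < 1 := by
    have h1 := hn.trans_le (Complex.re_le_norm _)
    have e1 : ‖c * d * (q : ℂ) / (a * b)‖ = q * ‖a * b / (c * d)‖⁻¹ := by
      rw [← norm_inv, inv_div, mul_div_right_comm, norm_mul, Complex.norm_real,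
        Real.norm_of_nonneg hq0.le, mul_comm]
    have e2 : (q : ℝ) ^ (-(2 * n : ℤ)) = (q ^ (2 * n))⁻¹ := by
      rw [zpow_neg, ← zpow_natCast]; push_cast; rfl
    rw [e1, e2] at h1
    have hpos : 0 < ‖a * b / (c * d)‖ := by
      rw [norm_pos_iff]
      exact div_ne_zero (mul_ne_zero ha hb) (mul_ne_zero hc hd)
    generalize ‖a * b / (c * d)‖ = r at *
    have hp : 0 < q ^ n := pow_pos hq0 n
    have hp1 : q ^ n ≤ 1 := pow_le_one₀ hq0.le hq1.le
    rw [inv_pow, ← div_eq_mul_inv, div_lt_one hp]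
    rw [← div_eq_mul_inv, lt_div_iff₀ hpos, inv_mul_lt_iff₀ (by positivity), two_mul,
      pow_add] at h1
    nlinarith [mul_pos hp hp]
  obtain ⟨r, hr1, hr2⟩ := exists_between hlt
  refine summable_of_ratio_norm_eventually_le hr2 ?_
  filter_upwards [hlim.eventually_le_const hr1] with i hi
  rw [show x / q ^ (i + 1) = (x / q ^ i) / q by rw [pow_succ]; field_simp, vW_div hq0 hq1]
  have e3 : ((q ^ (i + 1))⁻¹) ^ n = ((q ^ i)⁻¹) ^ n * (q⁻¹) ^ n := by
    rw [pow_succ, mul_inv, mul_pow]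
  rw [e3, norm_mul (vW _ _ _ _ _ _)]
  have hnn : 0 ≤ ‖vW q a b c d (x / q ^ i)‖ * ((q ^ i)⁻¹) ^ n := by positivity
  have := mul_le_mul_of_nonneg_left hi hnn
  rw [Real.norm_of_nonneg hnn, Real.norm_of_nonneg (by positivity)]
  simp only [hR] at this
  linarith

lemma vW_star {q : ℝ} (hq0 : 0 < q) (hq1 : q < 1) (a b c d : ℂ) (x : ℝ)
    (hc : 1 - c * x / q ≠ 0) (hd : 1 - d * x / q ≠ 0) :
    vW q a b c d x =
      vW q a b (c / q) (d / q) x * ((1 - c * x / q) * (1 - d * x / q)) := by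
  have hqc : (q : ℂ) ≠ 0 := by exact_mod_cast hq0.ne'
  have e : ∀ t : ℂ, qpochInf (t / q * x) q = (1 - t * x / q) * qpochInf (t * x) q := by
    intro t
    rw [qpochInf_step _ hq0 hq1, show t / (q : ℂ) * x * q = t * x by field_simp,
      div_mul_eq_mul_div]
  unfold vW
  rw [e c, e d]
  generalize qpochInf (c * x) q = C
  generalize qpochInf (d * x) q = D
  generalize 1 - c * x / (q : ℂ) = X at *
  generalize 1 - d * x / (q : ℂ) = Y at *
  rw [show X * C * (Y * D) = (C * D) * (X * Y) by ring,
    ← div_div _ (C * D) (X * Y), div_mul_cancel₀ _ (mul_ne_zero hc hd)]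

/-- the antidifference -/
def FF (q : ℝ) (a b c d : ℂ) (n : ℕ) (x : ℝ) : ℂ :=
  c * (q : ℂ) / ((b - c) * (a - c)) * (vW q a b c d x * pbqJ q a b c d n x)

/-- the summand -/
def GG (q : ℝ) (a b c d : ℂ) (n : ℕ) (x : ℝ) : ℂ :=
  weightC q a b (c / q) (d / q) x * pbqJ q a b (c / q) (d / q) (n + 1) x

lemma GG_eq (q : ℝ) (a b c d : ℂ) (n : ℕ) (x : ℝ) :
    GG q a b c d n x = ((|x| : ℝ) : ℂ) *
      (vW q a b (c / q) (d / q) x * pbqJ q a b (c / q) (d / q) (n + 1) x) := by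
  unfold GG weightC vW
  ring

lemma FF_step {q : ℝ} (hq0 : 0 < q) (hq1 : q < 1) (a b c d : ℂ) (n : ℕ)
    (ha : a ≠ 0) (hb : b ≠ 0) (hc : c ≠ 0) (hac : a ≠ c) (hbc : b ≠ c)
    (hA : ∀ k, 1 ≤ k → k ≤ n → c * (q : ℂ) ^ k ≠ a)
    (hB : ∀ k, 1 ≤ k → k ≤ n → c * (q : ℂ) ^ k ≠ b) (x : ℝ)
    (hcx : 1 - c * x / q ≠ 0) (hdx : 1 - d * x / q ≠ 0) :
    FF q a b c d n (x / q) - FF q a b c d n x =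
      x * (vW q a b (c / q) (d / q) x * pbqJ q a b (c / q) (d / q) (n + 1) x) := by
  have h := poly_identity q hq0 hq1 a b c d x n ha hb hc hac hbc hA hB
  unfold FF
  rw [vW_div hq0 hq1, vW_star hq0 hq1 a b c d x hcx hdx, mul_assoc (vW _ _ _ _ _ _),
    mul_div_cancel₀ _ (mul_ne_zero hcx hdx)]
  push_cast
  linear_combination (vW q a b (c / q) (d / q) x) * h

set_option maxHeartbeats 1000000 in
theorem backward_shift_summation (q zm zp : ℝ) (hq0 : 0 < q) (hq1 : q < 1) (hzm : zm < 0)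
    (hzp : 0 < zp) (a b c d : ℂ)
    (hab : AdmissiblePair q zm zp a b) (hcd : AdmissiblePair q zm zp c d)
    (hac : a ≠ c) (hbc : b ≠ c) (n : ℕ)
    (hn : (q : ℝ) ^ (-(2 * n : ℤ)) < (c * d * (q : ℂ) / (a * b)).re)
    (y : ℝ) (hy : y ∈ Lambda q zm zp) :
    Summable (fun x : {x : ↥(Lambda q zm zp) // triLT (x : ℝ) y} =>
      weightC q a b (c / q) (d / q) ((x : ℝ)) *
        pbqJ q a b (c / q) (d / q) (n + 1) (((x : ℝ) : ℂ))) ∧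
    ∑' x : {x : ↥(Lambda q zm zp) // triLT (x : ℝ) y},
        weightC q a b (c / q) (d / q) ((x : ℝ)) *
          pbqJ q a b (c / q) (d / q) (n + 1) (((x : ℝ) : ℂ))
      = c * (q : ℂ) / ((b - c) * (a - c)) *
          (weightC q a b c d y * pbqJ q a b c d n ((y : ℂ)) / (|y| : ℝ)) := by
  have hqc : (q : ℂ) ≠ 0 := by exact_mod_cast hq0.ne'
  have ha := hab.1
  have hb := hab.2.1
  have hc := hcd.1
  have hd := hcd.2.1
  have hB : ∀ k, 1 ≤ k → k ≤ n → c * (q : ℂ) ^ k ≠ b := fun k _ hk =>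
    no_resonance hq0 hq1 hzm hzp hab hcd n hn k hk
  have hA : ∀ k, 1 ≤ k → k ≤ n → c * (q : ℂ) ^ k ≠ a := fun k _ hk =>
    no_resonance hq0 hq1 hzm hzp (adm_symm hab) hcd n (by rwa [mul_comm b a]) k hk
  set F := FF q a b c d n with hF
  set G := GG q a b c d n with hG
  have hstep : ∀ x ∈ Lambda q zm zp, F (x / q) - F x =
      x * (vW q a b (c / q) (d / q) x * pbqJ q a b (c / q) (d / q) (n + 1) x) := by
    intro x hx
    have hx' := lambda_div hq0 hx
    have h1 := adm_mul_ne_one hcd hx'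
    have h2 := adm_mul_ne_one (adm_symm hcd) hx'
    push_cast at h1 h2
    rw [← mul_div_assoc] at h1 h2
    exact FF_step hq0 hq1 a b c d n ha hb hc hac hbc hA hB x (sub_ne_zero.2 h1.symm)
      (sub_ne_zero.2 h2.symm)
  have hpos : ∀ x ∈ Lambda q zm zp, 0 < x → G x = F (x / q) - F x := by
    intro x hx h0
    rw [hstep x hx, hG, GG_eq, abs_of_pos h0]
  have hneg : ∀ x ∈ Lambda q zm zp, x < 0 → G x = F x - F (x / q) := by
    intro x hx h0
    rw [← neg_sub, hstep x hx, hG, GG_eq, abs_of_neg h0]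
    push_cast; ring
  -- the limit at zero
  obtain ⟨L, hL⟩ : ∃ L : ℂ, ∀ x : ℝ, Filter.Tendsto (fun i : ℕ => F (x * q ^ i))
      Filter.atTop (nhds L) := by
    refine ⟨c * (q : ℂ) / ((b - c) * (a - c)) * (1 * pbqJ q a b c d n ((0 : ℝ) : ℂ)), fun x => ?_⟩
    have h1 : Filter.Tendsto (fun i : ℕ => x * q ^ i) Filter.atTop (nhds 0) := by
      simpa using (tendsto_pow_atTop_nhds_zero_of_lt_one hq0.le hq1).const_mul x
    have h2 := (((continuous_pbqJ q a b c d n).comp Complex.continuous_ofReal).tendsto 0).comp h1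
    exact ((vW_tendsto hq0 hq1 a b c d x).mul h2).const_mul _
  have hsum0 : ∀ x : ℝ, Summable (fun i : ℕ => G (x * q ^ i)) := by
    intro x
    have h1 : Filter.Tendsto (fun i : ℕ => x * q ^ i) Filter.atTop (nhds 0) := by
      simpa using (tendsto_pow_atTop_nhds_zero_of_lt_one hq0.le hq1).const_mul x
    have h2 := (((continuous_pbqJ q a b (c / q) (d / q) (n + 1)).comp
      Complex.continuous_ofReal).tendsto 0).comp h1
    have h3 := (vW_tendsto hq0 hq1 a b (c / q) (d / q) x).mul h2
    rw [← Nat.cofinite_eq_atTop] at h3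
    have h4 : Summable (fun i : ℕ => ‖((|x * q ^ i| : ℝ) : ℂ)‖) := by
      simp only [Complex.norm_real, Real.norm_eq_abs, abs_abs, abs_mul, abs_pow, abs_of_pos hq0]
      exact (summable_geometric_of_lt_one hq0.le hq1).mul_left _
    refine (h4.mul_tendsto_const h3).congr fun i => ?_
    rw [hG, GG_eq]
    rfl
  have hsumF : ∀ x : ℝ, x ≠ 0 → Summable (fun i : ℕ => F (x / q ^ i)) := by
    intro x hx
    obtain ⟨M, hM⟩ := pbqJ_bound hq0 hq1 a b c d x n
    have h1 := (vW_summable hq0 hq1 a b c d n ha hb hc hd hn x hx).mul_left M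
    apply Summable.mul_left
    refine Summable.of_norm_bounded h1 fun i => ?_
    rw [norm_mul]
    have := mul_le_mul_of_nonneg_left (hM i) (norm_nonneg (vW q a b c d (x / q ^ i)))
    push_cast
    linarith
  clear_value F G
  -- the three basic sums
  have hS1 : ∀ x ∈ Lambda q zm zp, x < 0 → HasSum (fun i : ℕ => G (x / q ^ i)) (F x) := by
    intro x hx h0
    have hs := hsumF x h0.ne
    have e : ∀ i : ℕ, G (x / q ^ i) = F (x / q ^ i) - F (x / q ^ (i + 1)) := by
      intro i
      rw [hneg _ (lambda_div_pow hq0 hx i) (div_neg_of_neg_of_pos h0 (pow_pos hq0 i)),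
        div_div, ← pow_succ]
    have hs2 : Summable (fun i : ℕ => G (x / q ^ i)) := by
      simp only [e]
      exact hs.sub ((summable_nat_add_iff 1).2 hs)
    rw [hs2.hasSum_iff_tendsto_nat]
    simp only [e, Finset.sum_range_sub' (fun i : ℕ => F (x / q ^ i))]
    simpa using hs.tendsto_atTop_zero.const_sub (F x)
  have hS2 : ∀ x ∈ Lambda q zm zp, x < 0 →
      HasSum (fun i : ℕ => G (x * q ^ (i + 1))) (L - F x) := by
    intro x hx h0
    have hs2 : Summable (fun i : ℕ => G (x * q ^ (i + 1))) :=
      (summable_nat_add_iff 1).2 (hsum0 x)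
    have e : ∀ i : ℕ, G (x * q ^ (i + 1)) = F (x * q ^ (i + 1)) - F (x * q ^ i) := by
      intro i
      rw [hneg _ (lambda_pow hq0 hx _) (mul_neg_of_neg_of_pos h0 (pow_pos hq0 _)),
        pow_succ, ← mul_assoc, mul_div_cancel_right₀ _ hq0.ne']
    rw [hs2.hasSum_iff_tendsto_nat]
    simp only [e, Finset.sum_range_sub (fun i : ℕ => F (x * q ^ i))]
    simpa using (hL x).sub_const (F x)
  have hS3 : ∀ x ∈ Lambda q zm zp, 0 < x →
      HasSum (fun i : ℕ => G (x * q ^ (i + 1))) (F x - L) := by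
    intro x hx h0
    have hs2 : Summable (fun i : ℕ => G (x * q ^ (i + 1))) :=
      (summable_nat_add_iff 1).2 (hsum0 x)
    have e : ∀ i : ℕ, G (x * q ^ (i + 1)) = F (x * q ^ i) - F (x * q ^ (i + 1)) := by
      intro i
      rw [hpos _ (lambda_pow hq0 hx _) (mul_pos h0 (pow_pos hq0 _)),
        pow_succ, ← mul_assoc, mul_div_cancel_right₀ _ hq0.ne']
    rw [hs2.hasSum_iff_tendsto_nat]
    simp only [e, Finset.sum_range_sub' (fun i : ℕ => F (x * q ^ i))]
    simpa using (hL x).const_sub (F x)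
  -- injectivity
  have hpinj : ∀ i j : ℕ, q ^ i = q ^ j → i = j := fun i j h =>
    pow_right_injective₀ hq0 hq1.ne h
  have inj1 : ∀ x : ℝ, x ≠ 0 → Function.Injective (fun i : ℕ => x / q ^ i) := by
    intro x hx i j h
    simp only at h
    apply hpinj
    have h1 := (pow_pos hq0 i).ne'
    have h2 := (pow_pos hq0 j).ne'
    field_simp at h
    exact h.symm
  have inj2 : ∀ x : ℝ, x ≠ 0 → Function.Injective (fun i : ℕ => x * q ^ (i + 1)) := by
    intro x hx i j h
    have := hpinj _ _ (mul_left_cancel₀ hx h)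
    omega
  have hy0 := lambda_ne hq0 hzm hzp hy
  set S : Set ℝ := {x | x ∈ Lambda q zm zp ∧ triLT x y} with hSdef
  have hmain : HasSum (fun x : S => G x) (F y) := by
    rcases lt_or_gt_of_ne hy0 with h0 | h0
    · have hSe : S = Set.range (fun i : ℕ => y / q ^ i) := by
        ext x
        constructor
        · rintro ⟨hx, hx2⟩
          have hxy : x ≤ y := by
            rcases hx2 with h | h
            · linarith [h.1]
            · exact h.2
          obtain ⟨j, hj⟩ : ∃ j : ℤ, y = zm * q ^ j := by
            rcases hy with h | ⟨j, h⟩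
            · exact h
            · have := mul_pos hzp (zpow_pos hq0 j); linarith
          obtain ⟨m, hm⟩ : ∃ j : ℤ, x = zm * q ^ j := by
            rcases hx with h | ⟨j, h⟩
            · exact h
            · have := mul_pos hzp (zpow_pos hq0 j); linarith
          have hmj : m ≤ j := by
            rw [hj, hm] at hxy
            have : q ^ j ≤ q ^ m := (mul_le_mul_left_of_neg hzm).1 hxy
            exact (zpow_le_zpow_iff_right_of_lt_one₀ hq0 hq1).1 this
          obtain ⟨i, hi⟩ := Int.eq_ofNat_of_zero_le (sub_nonneg.2 hmj)
          refine ⟨i, ?_⟩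
          simp only
          rw [← zpow_natCast q i, ← hi, hj, hm, mul_div_assoc, ← zpow_sub₀ hq0.ne']
          congr 2; ring
        · rintro ⟨i, rfl⟩
          refine ⟨lambda_div_pow hq0 hy i, Or.inr ⟨h0, ?_⟩⟩
          simp only
          rw [div_le_iff₀ (pow_pos hq0 i)]
          have : q ^ i ≤ 1 := pow_le_one₀ hq0.le hq1.le
          nlinarith
      rw [hSe]
      exact (inj1 y hy0).hasSum_range_iff.2 (hS1 y hy h0)
    · have hzmL : zm ∈ Lambda q zm zp := Or.inl ⟨0, by simp⟩
      have hSe : S = (Set.range (fun i : ℕ => zm / q ^ i) ∪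
          Set.range (fun i : ℕ => zm * q ^ (i + 1))) ∪
          Set.range (fun i : ℕ => y * q ^ (i + 1)) := by
        ext x
        constructor
        · rintro ⟨hx, hx2⟩
          have hxy : x < y := by
            rcases hx2 with h | h
            · exact h.2
            · linarith [h.1]
          rcases hx with ⟨m, hm⟩ | ⟨m, hm⟩
          · left
            rcases le_or_gt m 0 with h | h
            · left
              obtain ⟨i, hi⟩ := Int.eq_ofNat_of_zero_le (neg_nonneg.2 h)
              refine ⟨i, ?_⟩
              simp only
              rw [hm, ← zpow_natCast q i, ← hi, zpow_neg, div_inv_eq_mul]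
            · right
              obtain ⟨i, hi⟩ := Int.eq_ofNat_of_zero_le (show 0 ≤ m - 1 by omega)
              refine ⟨i, ?_⟩
              simp only
              rw [hm, ← zpow_natCast q (i + 1)]
              congr 2; push_cast; omega
          · right
            obtain ⟨j, hj⟩ : ∃ j : ℤ, y = zp * q ^ j := by
              rcases hy with ⟨j, h⟩ | h
              · have := mul_neg_of_neg_of_pos hzm (zpow_pos hq0 j); linarith
              · exact h
            have hmj : j < m := by
              rw [hj, hm] at hxy
              have : q ^ m < q ^ j := (mul_lt_mul_iff_right₀ hzp).1 hxy
              exact (zpow_lt_zpow_iff_right_of_lt_one₀ hq0 hq1).1 this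
            obtain ⟨i, hi⟩ := Int.eq_ofNat_of_zero_le (show 0 ≤ m - j - 1 by omega)
            refine ⟨i, ?_⟩
            simp only
            rw [hm, hj, ← zpow_natCast q (i + 1), mul_assoc, ← zpow_add₀ hq0.ne']
            congr 2; push_cast; omega
        · rintro ((⟨i, rfl⟩ | ⟨i, rfl⟩) | ⟨i, rfl⟩)
          · refine ⟨lambda_div_pow hq0 hzmL i, Or.inl ⟨h0, ?_⟩⟩
            exact (div_neg_of_neg_of_pos hzm (pow_pos hq0 i)).trans h0
          · refine ⟨lambda_pow hq0 hzmL _, Or.inl ⟨h0, ?_⟩⟩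
            exact (mul_neg_of_neg_of_pos hzm (pow_pos hq0 _)).trans h0
          · refine ⟨lambda_pow hq0 hy _, Or.inl ⟨h0, ?_⟩⟩
            exact mul_lt_of_lt_one_right h0 (pow_lt_one₀ hq0.le hq1 (by omega))
      have hd1 : Disjoint (Set.range (fun i : ℕ => zm / q ^ i))
          (Set.range (fun i : ℕ => zm * q ^ (i + 1))) := by
        rw [Set.disjoint_left]
        rintro _ ⟨i, rfl⟩ ⟨j, h⟩
        simp only at h
        have h1 : zm * q ^ (j + 1 + i) = zm := by
          rw [pow_add, ← mul_assoc, h, div_mul_cancel₀ _ (pow_pos hq0 i).ne']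
        have h2 : q ^ (j + 1 + i) < 1 := pow_lt_one₀ hq0.le hq1 (by omega)
        nlinarith
      have hd2 : Disjoint (Set.range (fun i : ℕ => zm / q ^ i) ∪
          Set.range (fun i : ℕ => zm * q ^ (i + 1)))
          (Set.range (fun i : ℕ => y * q ^ (i + 1))) := by
        rw [Set.disjoint_right]
        rintro _ ⟨i, rfl⟩ (⟨j, h⟩ | ⟨j, h⟩)
        · have h1 := mul_pos h0 (pow_pos hq0 (i + 1))
          have h2 := div_neg_of_neg_of_pos hzm (pow_pos hq0 j)
          simp only at h
          linarith
        · have h1 := mul_pos h0 (pow_pos hq0 (i + 1))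
          have h2 := mul_neg_of_neg_of_pos hzm (pow_pos hq0 (j + 1))
          simp only at h
          linarith
      have k1 := (inj1 zm hzm.ne).hasSum_range_iff (f := G).2 (hS1 zm hzmL hzm)
      have k2 := (inj2 zm hzm.ne).hasSum_range_iff (f := G).2 (hS2 zm hzmL hzm)
      have k3 := (inj2 y hy0).hasSum_range_iff (f := G).2 (hS3 y hy h0)
      have k := (k1.add_disjoint hd1 k2).add_disjoint hd2 k3
      rw [hSe, show F y = F zm + (L - F zm) + (F y - L) by ring]
      exact k
  have hcoe : Function.Injective
      (fun x : {x : ↥(Lambda q zm zp) // triLT (x : ℝ) y} => ((x : ↥(Lambda q zm zp)) : ℝ)) :=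
    fun u v h => Subtype.ext (Subtype.ext h)
  have hrange : Set.range
      (fun x : {x : ↥(Lambda q zm zp) // triLT (x : ℝ) y} => ((x : ↥(Lambda q zm zp)) : ℝ)) =
      S := by
    ext x
    constructor
    · rintro ⟨u, rfl⟩
      exact ⟨u.1.2, u.2⟩
    · rintro ⟨h1, h2⟩
      exact ⟨⟨⟨x, h1⟩, h2⟩, rfl⟩
  rw [← hrange] at hmain
  have hfin := hcoe.hasSum_range_iff.1 hmain
  have hFy : F y = c * (q : ℂ) / ((b - c) * (a - c)) *
          (weightC q a b c d y * pbqJ q a b c d n ((y : ℂ)) / (|y| : ℝ)) := by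
    have : ((|y| : ℝ) : ℂ) ≠ 0 := by exact_mod_cast (abs_pos.2 hy0).ne'
    rw [hF]
    unfold FF vW weightC
    congr 1
    rw [eq_div_iff this]
    ring
  rw [← hFy]
  rw [hG] at hfin
  exact ⟨hfin.summable, hfin.tsum_eq⟩

end
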